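/- arXiv:1305.4925 — 5 statements merged into one kernel-verified Lean document; each statement's English description precedes it below -/
import Mathlib

section
/- Let G be a connected bipartite graph with color classes E and V and s = |E| + |V| ≥ 2 vertices. Then the root polytope Q_G = conv{ 𝐞 + 𝐯 : (e,v) ∈ A } has affine dimension s − 2 (i.e., the affine span of the points 𝐞 + 𝐯 over all edges (e,v) ∈ A is an affine subspace of ℝ^E ⊕ ℝ^V of dimension s − 2). -/
/-!
Let `D` be the direction of the affine span. A vector `x` is orthogonal to `D` exactly when
`x e + x v` takes one common value `c` on all edges `(e, v)`. Then the function equal to `x e` on `E`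
and to `c - x v` on `V` agrees at the two ends of each edge, so it is constant because the graph is
connected (`eq_of_edges`): `x` is constant on `E` and constant on `V`. Conversely all such vectors are
orthogonal to `D`. As both colour classes are non-empty, these vectors form a plane (the injective
image of `ℝ × ℝ` under `blockConst`), so `D` has codimension `2`.
-/

/-- The point 𝐞 + 𝐯 of ℝ^E ⊕ ℝ^V associated to an edge (e,v) of a bipartite graph. -/
noncomputable def pt {E V : Type*} [Fintype E] [Fintype V] [DecidableEq E] [DecidableEq V]
    (p : E × V) : EuclideanSpace ℝ (E ⊕ V) :=
  EuclideanSpace.single (Sum.inl p.1) (1 : ℝ) + EuclideanSpace.single (Sum.inr p.2) (1 : ℝ)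

/-- The simple graph on the vertex set `E ⊔ V` whose edges are the pairs in `F`. -/
def graphOf {E V : Type*} (F : Set (E × V)) : SimpleGraph (E ⊕ V) :=
  SimpleGraph.fromRel fun x y => ∃ p ∈ F, x = Sum.inl p.1 ∧ y = Sum.inr p.2

/-- A function that agrees at the two ends of every edge of a connected graph is constant. -/
lemma eq_of_edges {E V β : Type*} {A : Set (E × V)} (hconn : (graphOf A).Connected)
    (y : E ⊕ V → β) (hy : ∀ p ∈ A, y (Sum.inl p.1) = y (Sum.inr p.2)) (a b : E ⊕ V) :
    y a = y b := by
  obtain ⟨w⟩ := hconn.preconnected a b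
  induction w with
  | nil => rfl
  | cons h _ ih =>
    rw [← ih]
    simp only [graphOf, SimpleGraph.fromRel_adj] at h
    obtain ⟨-, ⟨p, hp, rfl, rfl⟩ | ⟨p, hp, rfl, rfl⟩⟩ := h
    · exact hy p hp
    · exact (hy p hp).symm

/-- The linear map sending `(a, b)` to the vector with all `E`-coordinates equal to `a` and all
`V`-coordinates equal to `b`. -/
noncomputable def blockConst (E V : Type*) [Fintype E] [Fintype V] :
    ℝ × ℝ →ₗ[ℝ] EuclideanSpace ℝ (E ⊕ V) where
  toFun q := WithLp.toLp 2 (Sum.elim (fun _ => q.1) (fun _ => q.2))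
  map_add' q r := by ext (i | i) <;> simp
  map_smul' c q := by ext (i | i) <;> simp

lemma inner_pt {E V : Type*} [Fintype E] [Fintype V] [DecidableEq E] [DecidableEq V]
    (p : E × V) (x : EuclideanSpace ℝ (E ⊕ V)) :
    inner ℝ (pt p) x = x (Sum.inl p.1) + x (Sum.inr p.2) := by
  simp [pt, inner_add_left, EuclideanSpace.inner_single_left]

/-- Orthogonality to the direction, tested against a base edge `p₀`. -/
lemma mem_orthogonal_iff {E V : Type*} [Fintype E] [Fintype V] [DecidableEq E] [DecidableEq V]
    {A : Set (E × V)} {p₀ : E × V} (hp₀ : p₀ ∈ A) (x : EuclideanSpace ℝ (E ⊕ V)) :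
    x ∈ (vectorSpan ℝ (pt '' A))ᗮ ↔
      ∀ p ∈ A, x (Sum.inl p.1) + x (Sum.inr p.2) = x (Sum.inl p₀.1) + x (Sum.inr p₀.2) := by
  rw [vectorSpan_eq_span_vsub_set_right ℝ (Set.mem_image_of_mem pt hp₀),
    Submodule.mem_orthogonal]
  constructor
  · intro h p hp
    have := h _ (Submodule.subset_span ⟨pt p, ⟨p, hp, rfl⟩, rfl⟩)
    simp only [vsub_eq_sub, inner_sub_left, inner_pt] at this
    linarith
  · intro h u hu
    induction hu using Submodule.span_induction with
    | mem u hu =>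
      obtain ⟨_, ⟨p, hp, rfl⟩, rfl⟩ := hu
      simp only [vsub_eq_sub, inner_sub_left, inner_pt]
      linarith [h p hp]
    | zero => simp
    | add u v _ _ hu hv => rw [inner_add_left, hu, hv, add_zero]
    | smul c u _ hu => rw [inner_smul_left, hu, mul_zero]

/-- The affine span of the vertex set of the root polytope of a connected bipartite
graph with `s ≥ 2` vertices has dimension `s - 2`. -/
theorem rootPolytope_dim {E V : Type*} [Fintype E] [Fintype V] [DecidableEq E] [DecidableEq V]
    (A : Set (E × V)) (hconn : (graphOf A).Connected)
    (hs : 2 ≤ Fintype.card E + Fintype.card V) :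
    Module.finrank ℝ (affineSpan ℝ (pt '' A)).direction
      = Fintype.card E + Fintype.card V - 2 := by
  have hA : A.Nonempty := by
    by_contra hA
    rw [Set.not_nonempty_iff_eq_empty] at hA
    obtain ⟨a, b, hab⟩ := Fintype.one_lt_card_iff.mp
      (show 1 < Fintype.card (E ⊕ V) by rw [Fintype.card_sum]; omega)
    -- Without edges even the identity agrees at the ends of every edge.
    exact hab (eq_of_edges hconn id (by simp [hA]) a b)
  obtain ⟨p₀, hp₀⟩ := hA
  rw [direction_affineSpan]
  have hrange : (vectorSpan ℝ (pt '' A))ᗮ = LinearMap.range (blockConst E V) := by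
    ext x
    rw [mem_orthogonal_iff hp₀]
    constructor
    · intro h
      have hc := eq_of_edges hconn
        (Sum.elim (fun e => x (Sum.inl e))
          (fun v => x (Sum.inl p₀.1) + x (Sum.inr p₀.2) - x (Sum.inr v)))
        (fun p hp => by simp only [Sum.elim_inl, Sum.elim_inr]; linarith [h p hp])
        (Sum.inl p₀.1)
      refine ⟨(x (Sum.inl p₀.1), x (Sum.inr p₀.2)), ?_⟩
      ext (e | v)
      · simpa [blockConst] using hc (Sum.inl e)
      · have := hc (Sum.inr v)
        simp only [Sum.elim_inl, Sum.elim_inr] at this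
        simp only [blockConst, LinearMap.coe_mk, AddHom.coe_mk, Sum.elim_inr]
        linarith
    · rintro ⟨q, rfl⟩ p _
      simp [blockConst]
  have hinj : Function.Injective (blockConst E V) := by
    intro q r h
    have h1 := congrArg (fun x => x (Sum.inl p₀.1)) h
    have h2 := congrArg (fun x => x (Sum.inr p₀.2)) h
    simp only [blockConst, LinearMap.coe_mk, AddHom.coe_mk, Sum.elim_inl, Sum.elim_inr] at h1 h2
    exact Prod.ext h1 h2
  have hdim := (vectorSpan ℝ (pt '' A)).finrank_add_finrank_orthogonal
  rw [hrange, LinearMap.finrank_range_of_inj hinj, Module.finrank_prod, Module.finrank_self,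
    finrank_euclideanSpace, Fintype.card_sum] at hdim
  omega
end

section
/- Let G be a bipartite graph with color classes E and V and edge set A ⊆ E × V. For any subset F ⊆ A, the family of points { 𝐞 + 𝐯 : (e,v) ∈ F } in ℝ^E ⊕ ℝ^V is affinely independent if and only if F is a forest, i.e., the simple graph on the vertex set E ⊔ V with edge set F is acyclic. -/
section

variable {E V : Type*}

lemma graphOf_adj_inl_inr {F : Set (E × V)} {e : E} {v : V} :
    (graphOf F).Adj (Sum.inl e) (Sum.inr v) ↔ (e, v) ∈ F := by
  simp [graphOf]

lemma exists_of_graphOf_adj {F : Set (E × V)} {x y : E ⊕ V} (h : (graphOf F).Adj x y) :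
    ∃ p ∈ F, (x = Sum.inl p.1 ∧ y = Sum.inr p.2) ∨ (y = Sum.inl p.1 ∧ x = Sum.inr p.2) := by
  obtain ⟨-, ⟨p, hp, h⟩ | ⟨p, hp, h⟩⟩ := h
  exacts [⟨p, hp, .inl h⟩, ⟨p, hp, .inr h⟩]

lemma graphOf_diff_singleton (F : Set (E × V)) (p : E × V) :
    graphOf (F \ {p}) = (graphOf F).deleteEdges {s(Sum.inl p.1, Sum.inr p.2)} := by
  obtain ⟨e, v⟩ := p
  ext (x | x) (y | y) <;> simp [graphOf] <;> grind

lemma graphOf_isAcyclic_iff (F : Set (E × V)) :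
    (graphOf F).IsAcyclic ↔
      ∀ p ∈ F, ¬ (graphOf (F \ {p})).Reachable (Sum.inl p.1) (Sum.inr p.2) := by
  rw [SimpleGraph.isAcyclic_iff_forall_adj_isBridge]
  simp only [graphOf_diff_singleton]
  constructor
  · intro h p hp
    exact SimpleGraph.isBridge_iff.1 (h (graphOf_adj_inl_inr.2 hp))
  · intro h x y hxy
    obtain ⟨p, hp, ⟨rfl, rfl⟩ | ⟨rfl, rfl⟩⟩ := exists_of_graphOf_adj hxy
    · exact SimpleGraph.isBridge_iff.2 (h p hp)
    · rw [Sym2.eq_swap]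
      exact SimpleGraph.isBridge_iff.2 (h p hp)

variable [Fintype E] [Fintype V] [DecidableEq E] [DecidableEq V]

/-- The linear functional with coefficients `c`. -/
def functional (c : E ⊕ V → ℝ) : EuclideanSpace ℝ (E ⊕ V) →ₗ[ℝ] ℝ where
  toFun x := ∑ i, c i * x i
  map_add' x y := by simp [mul_add, Finset.sum_add_distrib]
  map_smul' r x := by simp [Finset.mul_sum, mul_left_comm, -Fintype.sum_sum_type]

lemma functional_pt (c : E ⊕ V → ℝ) (p : E × V) :
    functional c (pt p) = c (Sum.inl p.1) + c (Sum.inr p.2) := by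
  simp [functional, pt]

/-- The points `𝐞 + 𝐯` lie on an affine hyperplane missing the origin, so that affine and linear
independence agree. -/
lemma affineIndependent_pt_iff (F : Set (E × V)) :
    AffineIndependent ℝ (fun p : F => pt (p : E × V)) ↔
      LinearIndependent ℝ (fun p : F => pt (p : E × V)) := by
  rw [affineIndependent_iff, linearIndependent_iff']
  refine ⟨fun h s w hw => h s w ?_ hw, fun h s w _ hw => h s w hw⟩
  simpa [functional_pt] using congrArg (functional (Sum.elim (fun _ => 1) (fun _ => 0))) hw

/-- The basis vector of a vertex, negated on `V`: with these signs, the points `𝐞 + 𝐯` become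
differences, which telescope along walks. -/
noncomputable def signedBasis : E ⊕ V → EuclideanSpace ℝ (E ⊕ V) :=
  Sum.elim (fun e => EuclideanSpace.single (Sum.inl e) 1)
    (fun v => -EuclideanSpace.single (Sum.inr v) 1)

lemma signedBasis_sub (p : E × V) :
    signedBasis (Sum.inl p.1) - signedBasis (Sum.inr p.2) = pt p := by
  simp [signedBasis, pt]

lemma signedBasis_sub_mem_span {S : Set (E × V)} {x y : E ⊕ V} (h : (graphOf S).Reachable x y) :
    signedBasis x - signedBasis y ∈ Submodule.span ℝ (pt '' S) := by
  obtain ⟨w⟩ := h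
  induction w with
  | nil => simp
  | @cons x z y hxz _ ih =>
    rw [← sub_add_sub_cancel _ (signedBasis z)]
    refine add_mem ?_ ih
    obtain ⟨p, hp, ⟨rfl, rfl⟩ | ⟨rfl, rfl⟩⟩ := exists_of_graphOf_adj hxz
    · rw [signedBasis_sub]
      exact Submodule.subset_span ⟨p, hp, rfl⟩
    · rw [← neg_sub, signedBasis_sub]
      exact neg_mem (Submodule.subset_span ⟨p, hp, rfl⟩)

lemma pt_mem_span_iff (S : Set (E × V)) (p : E × V) :
    pt p ∈ Submodule.span ℝ (pt '' S) ↔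
      (graphOf S).Reachable (Sum.inl p.1) (Sum.inr p.2) := by
  refine ⟨fun h => ?_, fun h => signedBasis_sub p ▸ signedBasis_sub_mem_span h⟩
  by_contra hp
  classical
  -- The signed indicator of the connected component of `p.1`.
  let c : E ⊕ V → ℝ := fun x =>
    if (graphOf S).Reachable (Sum.inl p.1) x then Sum.elim (fun _ => 1) (fun _ => -1) x else 0
  have hker : Submodule.span ℝ (pt '' S) ≤ LinearMap.ker (functional c) := by
    rw [Submodule.span_le]
    rintro _ ⟨q, hq, rfl⟩
    have hadj : (graphOf S).Adj (Sum.inl q.1) (Sum.inr q.2) := graphOf_adj_inl_inr.2 hq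
    have hiff : (graphOf S).Reachable (Sum.inl p.1) (Sum.inl q.1) ↔
        (graphOf S).Reachable (Sum.inl p.1) (Sum.inr q.2) :=
      ⟨fun h => h.trans hadj.reachable, fun h => h.trans hadj.symm.reachable⟩
    rw [SetLike.mem_coe, LinearMap.mem_ker, functional_pt]
    by_cases hr : (graphOf S).Reachable (Sum.inl p.1) (Sum.inr q.2) <;> simp [c, hiff, hr]
  have := LinearMap.mem_ker.1 (hker h)
  simp [functional_pt, c, hp] at this

end

/-- For a subset `F` of the edges of a bipartite graph, the family of points
`𝐞 + 𝐯`, `(e,v) ∈ F`, is affinely independent iff `F` is a forest. -/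
theorem affineIndependent_iff_forest {E V : Type*} [Fintype E] [Fintype V]
    [DecidableEq E] [DecidableEq V] (A : Set (E × V)) (F : Set (E × V)) (hFA : F ⊆ A) :
    AffineIndependent ℝ (fun p : F => pt (p : E × V)) ↔ (graphOf F).IsAcyclic := by
  rw [affineIndependent_pt_iff, linearIndependent_iff_notMem_span, graphOf_isAcyclic_iff,
    Subtype.forall]
  refine forall₂_congr fun p hp => ?_
  rw [← pt_mem_span_iff]
  have himage : (fun q : F => pt (q : E × V)) '' (Set.univ \ {⟨p, hp⟩}) = pt '' (F \ {p}) := by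
    ext x
    simp only [Set.mem_image, Set.mem_sdiff, Set.mem_univ, Set.mem_singleton_iff, Subtype.exists,
      Subtype.mk.injEq, true_and]
    grind
  rw [himage]
end

section
/- Let G be a connected bipartite graph with color classes E and V, edge set A ⊆ E × V, and s = |E| + |V| ≥ 2 vertices. For any two spanning trees Γ₁ and Γ₂ of G, the corresponding maximal simplices σ_{Γ₁} = conv{ 𝐞 + 𝐯 : (e,v) ∈ Γ₁ } and σ_{Γ₂} = conv{ 𝐞 + 𝐯 : (e,v) ∈ Γ₂ } have the same (s − 2)-dimensional volume: their (s − 2)-dimensional Hausdorff measures in the Euclidean space ℝ^E ⊕ ℝ^V are equal. -/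
/-!
Write `s = n + 2`. A spanning tree `Γ` has `n + 1` edges; fix one of them, `p₀`. Up to a translation,
`σ_Γ` is the convex hull of `0` and the `n` edge vectors `pt p - pt p₀`, that is, the image of a fixed
simplex of `ℝⁿ` under the linear map sending the standard basis to these edge vectors. Its
`n`-dimensional Hausdorff measure is therefore the square root of the Gram determinant of the
edge vectors (the `LinearMap.normDet` of this map) times a constant depending only on `n`.

The point is that the edge vectors of every spanning tree generate the same lattice, namely the one
generated by all the differences `pt q - pt q'` (`pt_sub_pt_mem_span`): following a path in the tree
expresses `pt q` as an integral combination of the `pt p`, `p ∈ Γ`, and comparing the sums of the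
coordinates indexed by `E` shows that its coefficients add up to `1`. Hence the linear maps of two
trees differ by integer matrices in both directions. Each of the two values of `normDet` is then a
natural multiple of the other, so they are equal (`hausdorffMeasure_simplex_eq`). In particular the
linear independence of the edge vectors is never needed.
-/

open MeasureTheory

/-! ### Simplices generating the same lattice -/

/-- The linear map `ℝⁿ → H` sending the `i`-th standard basis vector to `a i`. -/
noncomputable def frameMap {H : Type*} [NormedAddCommGroup H] [InnerProductSpace ℝ H] {n : ℕ}
    (a : Fin n → H) : EuclideanSpace ℝ (Fin n) →ₗ[ℝ] H :=
  (EuclideanSpace.basisFun (Fin n) ℝ).toBasis.constr ℝ a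

lemma frameMap_basis {H : Type*} [NormedAddCommGroup H] [InnerProductSpace ℝ H] {n : ℕ}
    (a : Fin n → H) (i : Fin n) :
    frameMap a ((EuclideanSpace.basisFun (Fin n) ℝ).toBasis i) = a i :=
  (EuclideanSpace.basisFun (Fin n) ℝ).toBasis.constr_basis ℝ a i

/-- If the vectors `b i` are integral combinations of the `a i`, then the two maps differ by an
integer matrix, whose determinant is the factor `m` up to sign. -/
lemma exists_normDet_frameMap_eq_mul {H : Type*} [NormedAddCommGroup H] [InnerProductSpace ℝ H]
    {n : ℕ} (a b : Fin n → H) (h : ∀ i, b i ∈ Submodule.span ℤ (Set.range a)) :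
    ∃ m : ℕ, (frameMap b).normDet = (frameMap a).normDet * m := by
  simp_rw [Submodule.mem_span_range_iff_exists_fun] at h
  choose c hc using h
  let B := (EuclideanSpace.basisFun (Fin n) ℝ).toBasis
  let M : Matrix (Fin n) (Fin n) ℤ := Matrix.of fun j i => c i j
  let T := Matrix.toLin B B (M.map (Int.castRingHom ℝ))
  have hT : frameMap b = frameMap a ∘ₗ T := by
    refine B.ext fun i => ?_
    rw [LinearMap.comp_apply, frameMap_basis, Matrix.toLin_self, map_sum, ← hc i]
    refine Finset.sum_congr rfl fun j _ => ?_
    rw [map_smul, frameMap_basis, ← Int.cast_smul_eq_zsmul ℝ]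
    rfl
  refine ⟨M.det.natAbs, ?_⟩
  rw [hT, LinearMap.normDet_comp_of_finrank_eq _ _ rfl, LinearMap.normDet_eq_abs_det,
    LinearMap.det_toLin, ← RingHom.mapMatrix_apply, ← RingHom.map_det, Nat.cast_natAbs]
  simp

lemma normDet_frameMap_eq {H : Type*} [NormedAddCommGroup H] [InnerProductSpace ℝ H]
    {n : ℕ} (a b : Fin n → H) (hb : ∀ i, b i ∈ Submodule.span ℤ (Set.range a))
    (ha : ∀ i, a i ∈ Submodule.span ℤ (Set.range b)) :
    (frameMap a).normDet = (frameMap b).normDet := by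
  obtain ⟨m, hm⟩ := exists_normDet_frameMap_eq_mul a b hb
  obtain ⟨k, hk⟩ := exists_normDet_frameMap_eq_mul b a ha
  by_cases h0 : (frameMap a).normDet = 0
  · rw [hm, h0, zero_mul]
  · rw [hm, mul_assoc] at hk
    have h1 : (m : ℝ) * k = 1 := mul_left_cancel₀ h0 (by rw [← hk, mul_one])
    have h2 : m = 1 := Nat.eq_one_of_mul_eq_one_right (by exact_mod_cast h1)
    rw [hm, h2, Nat.cast_one, mul_one]

/-- Two simplices with a vertex at the origin have the same volume if the remaining vertices of each
are integral combinations of those of the other. -/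
lemma hausdorffMeasure_simplex_eq {H : Type*} [NormedAddCommGroup H] [InnerProductSpace ℝ H]
    [MeasurableSpace H] [BorelSpace H] {n : ℕ} (a b : Fin n → H)
    (hb : ∀ i, b i ∈ Submodule.span ℤ (Set.range a))
    (ha : ∀ i, a i ∈ Submodule.span ℤ (Set.range b)) :
    μH[(n : ℝ)] (convexHull ℝ (insert 0 (Set.range a)))
      = μH[(n : ℝ)] (convexHull ℝ (insert 0 (Set.range b))) := by
  let B := (EuclideanSpace.basisFun (Fin n) ℝ).toBasis
  have key : ∀ c : Fin n → H, μH[(n : ℝ)] (convexHull ℝ (insert 0 (Set.range c))) =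
      ENNReal.ofReal (frameMap c).normDet
        * μH[(n : ℝ)] (convexHull ℝ (insert 0 (Set.range B))) := by
    intro c
    have himage : insert 0 (Set.range c) = frameMap c '' insert 0 (Set.range B) := by
      rw [Set.image_insert_eq, map_zero, ← Set.range_comp]
      congr 2
      exact funext fun i => (frameMap_basis c i).symm
    have h := (frameMap c).hausdorffMeasure_image (convexHull ℝ (insert 0 (Set.range B)))
    rwa [finrank_euclideanSpace_fin, LinearMap.image_convexHull, ← himage] at h
  rw [key a, key b, normDet_frameMap_eq a b hb ha]

/-! ### The lattice generated by a spanning tree -/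

/-- The map `(e, v) ↦ s(e, v)` is a bijection from `Γ` to the edges of its graph. -/
lemma ncard_add_one_of_isTree {E V : Type*} [Fintype E] [Fintype V] {Γ : Set (E × V)}
    (hΓ : (graphOf Γ).IsTree) :
    Γ.ncard + 1 = Fintype.card E + Fintype.card V := by
  classical
  have himage : (graphOf Γ).edgeSet =
      (fun p : E × V => s(Sum.inl p.1, Sum.inr p.2)) '' Γ := by
    ext z
    induction z using Sym2.ind with
    | _ x y =>
      rw [SimpleGraph.mem_edgeSet]
      constructor
      · rintro ⟨-, ⟨p, hp, rfl, rfl⟩ | ⟨p, hp, rfl, rfl⟩⟩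
        · exact ⟨p, hp, rfl⟩
        · exact ⟨p, hp, Sym2.eq_swap⟩
      · rintro ⟨p, hp, h⟩
        rcases Sym2.eq_iff.1 h with ⟨rfl, rfl⟩ | ⟨rfl, rfl⟩
        · exact ⟨by simp, Or.inl ⟨p, hp, rfl, rfl⟩⟩
        · exact ⟨by simp, Or.inr ⟨p, hp, rfl, rfl⟩⟩
  have hinj : Function.Injective
      (fun p : E × V => (s(Sum.inl p.1, Sum.inr p.2) : Sym2 (E ⊕ V))) := by
    rintro ⟨e, v⟩ ⟨e', v'⟩ h
    simpa using h
  have hcard := hΓ.card_edgeFinset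
  rw [Fintype.card_sum, ← Set.ncard_coe_finset, SimpleGraph.coe_edgeFinset, himage,
    Set.ncard_image_of_injective _ hinj] at hcard
  exact hcard

section Tree

variable {E V : Type*} [Fintype E] [Fintype V] [DecidableEq E] [DecidableEq V]

/-- The standard basis vectors of `ℝ^E ⊕ ℝ^V`, those indexed by `V` taken with a minus sign, so that
`pt (e, v)` is a difference of two of them and path sums telescope. -/
noncomputable def signedSingle : E ⊕ V → EuclideanSpace ℝ (E ⊕ V) :=
  Sum.elim (fun e => EuclideanSpace.single (Sum.inl e) 1)
    (fun v => -EuclideanSpace.single (Sum.inr v) 1)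

lemma pt_eq_signedSingle_sub (p : E × V) :
    pt p = signedSingle (Sum.inl p.1) - signedSingle (Sum.inr p.2) := by
  simp [pt, signedSingle]

/-- The integer `k` is the signed number of edges on a walk from `x` to `y`. -/
lemma exists_signedSingle_sub_mem (Γ : Set (E × V)) (p₀ : E × V) {x y : E ⊕ V}
    (w : (graphOf Γ).Walk x y) :
    ∃ k : ℤ, signedSingle x - signedSingle y - k • pt p₀ ∈
      Submodule.span ℤ ((fun p => pt p - pt p₀) '' Γ) := by
  induction w with
  | nil => exact ⟨0, by simp⟩
  | @cons x z y hxz _ ih =>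
    obtain ⟨k, hk⟩ := ih
    rcases hxz.2 with ⟨p, hp, hx, hz⟩ | ⟨p, hp, hz, hx⟩
    · have hD := Submodule.subset_span (R := ℤ) (Set.mem_image_of_mem (fun p => pt p - pt p₀) hp)
      refine ⟨k + 1, ?_⟩
      convert add_mem hD hk using 1
      simp only [pt_eq_signedSingle_sub p, hx, hz, add_smul, one_smul]
      abel
    · have hD := Submodule.subset_span (R := ℤ) (Set.mem_image_of_mem (fun p => pt p - pt p₀) hp)
      refine ⟨k - 1, ?_⟩
      convert sub_mem hk hD using 1
      simp only [pt_eq_signedSingle_sub p, hx, hz, sub_smul, one_smul]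
      abel

lemma sum_inl_pt (p : E × V) : ∑ e : E, pt p (Sum.inl e) = 1 := by
  simp [pt]

lemma pt_sub_pt_mem_span {Γ : Set (E × V)} (hΓ : (graphOf Γ).Connected) (p₀ q : E × V) :
    pt q - pt p₀ ∈ Submodule.span ℤ ((fun p => pt p - pt p₀) '' Γ) := by
  obtain ⟨w⟩ := hΓ.preconnected (Sum.inl q.1) (Sum.inr q.2)
  obtain ⟨k, hk⟩ := exists_signedSingle_sub_mem Γ p₀ w
  rw [← pt_eq_signedSingle_sub] at hk
  have hsum : ∀ x ∈ Submodule.span ℤ ((fun p : E × V => pt p - pt p₀) '' Γ),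
      ∑ e : E, x (Sum.inl e) = 0 := by
    intro x hx
    induction hx using Submodule.span_induction with
    | mem x hx =>
      obtain ⟨p, -, rfl⟩ := hx
      simp [Finset.sum_sub_distrib, sum_inl_pt]
    | zero => simp
    | add x y _ _ hx hy => simp [Finset.sum_add_distrib, hx, hy]
    | smul c x _ hx =>
      rw [← Int.cast_smul_eq_zsmul ℝ]
      simp [← Finset.mul_sum, hx]
  have h1 := hsum _ hk
  rw [← Int.cast_smul_eq_zsmul ℝ] at h1
  simp only [PiLp.sub_apply, PiLp.smul_apply, smul_eq_mul, Finset.sum_sub_distrib,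
    ← Finset.mul_sum, sum_inl_pt, mul_one] at h1
  have hk1 : k = 1 := by
    have : (k : ℝ) = 1 := by linarith
    exact_mod_cast this
  simpa [hk1] using hk

open scoped Pointwise in
/-- Up to translation, `σ_Γ` is the simplex spanned by `0` and `n` vectors which generate all
differences of points `pt q` and are themselves such differences. -/
lemma exists_frame_of_isTree {Γ : Set (E × V)} (hΓ : (graphOf Γ).IsTree) {n : ℕ}
    (hn : Fintype.card E + Fintype.card V = n + 2) :
    ∃ a : Fin n → EuclideanSpace ℝ (E ⊕ V),
      (∀ i, ∃ q q' : E × V, a i = pt q - pt q') ∧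
      (∀ q q' : E × V, pt q - pt q' ∈ Submodule.span ℤ (Set.range a)) ∧
      μH[(n : ℝ)] (convexHull ℝ (pt '' Γ))
        = μH[(n : ℝ)] (convexHull ℝ (insert 0 (Set.range a))) := by
  have hcard : Γ.ncard = n + 1 := by
    have := ncard_add_one_of_isTree hΓ
    omega
  obtain ⟨p₀, hp₀⟩ : Γ.Nonempty := Set.nonempty_of_ncard_ne_zero (by omega)
  have hcard' : Nat.card ↥(Γ \ {p₀}) = n := by
    rw [Nat.card_coe_set_eq, Set.ncard_sdiff_singleton_of_mem hp₀, hcard, Nat.add_sub_cancel]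
  let f : Fin n ≃ ↥(Γ \ {p₀}) := (Finite.equivFinOfCardEq hcard').symm
  let a : Fin n → EuclideanSpace ℝ (E ⊕ V) := fun i => pt (f i : E × V) - pt p₀
  have himage : insert 0 (Set.range a) = (fun p => pt p - pt p₀) '' Γ := by
    have hrange : Set.range a = (fun p => pt p - pt p₀) '' (Γ \ {p₀}) := by
      rw [Set.image_eq_range]
      exact f.surjective.range_comp fun p : ↥(Γ \ {p₀}) => pt (p : E × V) - pt p₀
    rw [hrange, ← sub_self (pt p₀),
      ← Set.image_insert_eq (f := fun p : E × V => pt p - pt p₀), Set.insert_sdiff_singleton,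
      Set.insert_eq_of_mem hp₀]
  have hspan : ∀ q, pt q - pt p₀ ∈ Submodule.span ℤ (Set.range a) := by
    intro q
    rw [← Submodule.span_insert_zero, himage]
    exact pt_sub_pt_mem_span hΓ.connected p₀ q
  refine ⟨a, fun i => ⟨f i, p₀, rfl⟩, fun q q' => ?_, ?_⟩
  · simpa using sub_mem (hspan q) (hspan q')
  · have htranslate : pt '' Γ = pt p₀ +ᵥ (insert 0 (Set.range a)) := by
      rw [himage, ← Set.image_vadd, Set.image_image]
      simp
    rw [htranslate, convexHull_vadd, hausdorffMeasure_vadd _ (Or.inl n.cast_nonneg)]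

end Tree

/-- In the root polytope of a connected bipartite graph on `s ≥ 2` vertices, the maximal
simplices corresponding to any two spanning trees have the same `(s-2)`-dimensional
volume (Hausdorff measure). -/
theorem volumes_of_maximal_simplices_agree {E V : Type*} [Fintype E] [Fintype V]
    [DecidableEq E] [DecidableEq V] (A : Set (E × V)) (hconn : (graphOf A).Connected)
    (hs : 2 ≤ Fintype.card E + Fintype.card V)
    (Γ₁ Γ₂ : Set (E × V)) (h₁ : Γ₁ ⊆ A) (h₂ : Γ₂ ⊆ A)
    (ht₁ : (graphOf Γ₁).IsTree) (ht₂ : (graphOf Γ₂).IsTree) :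
    μH[(Fintype.card E + Fintype.card V : ℝ) - 2] (convexHull ℝ (pt '' Γ₁))
      = μH[(Fintype.card E + Fintype.card V : ℝ) - 2] (convexHull ℝ (pt '' Γ₂)) := by
  obtain ⟨n, hn⟩ : ∃ n, Fintype.card E + Fintype.card V = n + 2 := ⟨_, (Nat.sub_add_cancel hs).symm⟩
  have hdim : (Fintype.card E + Fintype.card V : ℝ) - 2 = n := by
    rw [← Nat.cast_add, hn]
    simp
  obtain ⟨a, ha, ha', hμa⟩ := exists_frame_of_isTree ht₁ hn
  obtain ⟨b, hb, hb', hμb⟩ := exists_frame_of_isTree ht₂ hn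
  rw [hdim, hμa, hμb]
  refine hausdorffMeasure_simplex_eq a b (fun i => ?_) (fun i => ?_)
  · obtain ⟨q, q', h⟩ := hb i
    exact h ▸ ha' q q'
  · obtain ⟨q, q', h⟩ := ha i
    exact h ▸ hb' q q'
end

section
/- Let G be a connected bipartite graph with color classes E and V and edge set A ⊆ E × V, and let Γ₁ and Γ₂ be spanning trees of G. Then the following two statements are equivalent: (i) the simplices σ_{Γ₁} and σ_{Γ₂} in the root polytope Q_G intersect in a common face, i.e., σ_{Γ₁} ∩ σ_{Γ₂} = conv{ 𝐞 + 𝐯 : (e,v) ∈ Γ₁ ∩ Γ₂ }; (ii) there does not exist a cycle ε₁, ε₂, …, ε_{2k} of edges of G with k ≥ 2 (a closed walk in the simple graph on E ⊔ V visiting 2k distinct vertices, with consecutive edges sharing an endpoint) such that all odd-index edges ε₁, ε₃, …, ε_{2k−1} belong to Γ₁ and all even-index edges ε₂, ε₄, …, ε_{2k} belong to Γ₂. -/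
/-! ### Alternating cycles in matrices with zero marginals -/

theorem val_add_one_mod {k : ℕ} (i : Fin (k + 2)) :
    (i + 1 : Fin (k + 2)).val = (i.val + 1) % (k + 2) := by
  simp [Fin.val_add]

/-- A nonzero matrix with zero row and column sums contains a cycle of entries which are alternately
positive and negative. -/
theorem exists_alternating_cycle {E V : Type*} [Fintype E] [Fintype V] (w : E × V → ℝ)
    (hrow : ∀ a, ∑ b, w (a, b) = 0) (hcol : ∀ b, ∑ a, w (a, b) = 0) (hw : w ≠ 0) :
    ∃ (k : ℕ) (e : Fin (k + 2) → E) (v : Fin (k + 2) → V),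
      Function.Injective e ∧ Function.Injective v ∧
      (∀ i, 0 < w (e i, v i)) ∧ (∀ i, w (e (i + 1), v i) < 0) := by
  classical
  have rowpos : ∀ a b, w (a, b) < 0 → ∃ b', 0 < w (a, b') := by
    intro a b h
    by_contra! hn
    have := Finset.sum_lt_sum (s := Finset.univ) (f := fun b => w (a, b)) (g := fun _ => 0)
      (fun i _ => hn i) ⟨b, Finset.mem_univ _, h⟩
    simp [hrow] at this
  have colneg : ∀ a b, 0 < w (a, b) → ∃ a', w (a', b) < 0 := by
    intro a b h
    by_contra! hn
    have := Finset.sum_lt_sum (s := Finset.univ) (f := fun _ => (0 : ℝ)) (g := fun a => w (a, b))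
      (fun i _ => hn i) ⟨a, Finset.mem_univ _, h⟩
    simp [hcol] at this
  let S := {a : E // ∃ b, 0 < w (a, b)}
  let T := {b : V // ∃ a, 0 < w (a, b)}
  have hST : ∀ s : S, ∃ t : T, 0 < w (s.1, t.1) := by
    rintro ⟨a, b, h⟩
    exact ⟨⟨b, a, h⟩, h⟩
  have hTS : ∀ t : T, ∃ s : S, w (s.1, t.1) < 0 := by
    rintro ⟨b, a, h⟩
    obtain ⟨a', h'⟩ := colneg a b h
    exact ⟨⟨a', rowpos a' b h'⟩, h'⟩
  choose f hf using hST
  choose n hn using hTS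
  obtain ⟨s₀⟩ : Nonempty S := by
    obtain ⟨⟨a, b⟩, hab⟩ := Function.ne_iff.mp hw
    rcases lt_or_gt_of_ne hab with h | h
    · exact ⟨⟨a, rowpos a b h⟩⟩
    · exact ⟨⟨a, b, h⟩⟩
  let g : S → S := fun s => n (f s)
  obtain ⟨x, hx⟩ : ∃ x, x ∈ Function.periodicPts g := by
    obtain ⟨i, j, hij, h⟩ := Finite.exists_ne_map_eq_of_infinite (fun i : ℕ => g^[i] s₀)
    wlog hlt : i < j generalizing i j
    · exact this j i hij.symm h.symm (by omega)
    refine ⟨g^[i] s₀, j - i, by omega, ?_⟩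
    change g^[j - i] (g^[i] s₀) = _
    rw [← Function.iterate_add_apply, Nat.sub_add_cancel hlt.le]
    exact h.symm
  have hp0 := Function.minimalPeriod_pos_of_mem_periodicPts hx
  have hp1 : Function.minimalPeriod g x ≠ 1 := by
    intro h
    have h1 : n (f x) = x := Function.minimalPeriod_eq_one_iff_isFixedPt.mp h
    have h2 := hn (f x)
    rw [h1] at h2
    exact lt_asymm h2 (hf x)
  obtain ⟨k, hk⟩ : ∃ k, Function.minimalPeriod g x = k + 2 :=
    ⟨Function.minimalPeriod g x - 2, by omega⟩
  have hsucc : ∀ i : Fin (k + 2), g^[(i + 1 : Fin (k + 2)).val] x = g (g^[i.val] x) := by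
    intro i
    have h := Function.iterate_mod_minimalPeriod_eq (f := g) (x := x) (n := i.val + 1)
    rw [hk] at h
    rw [val_add_one_mod, h, Function.iterate_succ_apply']
  have hinj : Function.Injective fun i : Fin (k + 2) => g^[i.val] x := by
    intro i j hij
    apply Fin.ext
    exact Function.iterate_injOn_Iio_minimalPeriod (by simp [hk]) (by simp [hk]) hij
  refine ⟨k, fun i => (g^[i.val] x).1, fun i => (f (g^[i.val] x)).1, ?_, ?_, ?_, ?_⟩
  · exact fun i j h => hinj (Subtype.ext h)
  · intro i j h
    -- `g` factors through `f`, so equal columns force equal successor rows.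
    have h' : g^[(i + 1 : Fin (k + 2)).val] x = g^[(j + 1 : Fin (k + 2)).val] x := by
      rw [hsucc, hsucc]
      exact congrArg n (Subtype.ext h)
    exact add_right_cancel (hinj h')
  · exact fun i => hf _
  · intro i
    simp only [hsucc]
    exact hn _

/-! ### Cycles and forests -/

theorem graphOf_adj {E V : Type*} {F : Set (E × V)} {a : E} {b : V} :
    (graphOf F).Adj (Sum.inl a) (Sum.inr b) ↔ (a, b) ∈ F := by
  simp [graphOf]

theorem not_isAcyclic_of_cycle {E V : Type*} {F : Set (E × V)} {k : ℕ}
    {e : Fin (k + 2) → E} {v : Fin (k + 2) → V}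
    (he : Function.Injective e) (hv : Function.Injective v)
    (h₁ : ∀ i, (e i, v i) ∈ F) (h₂ : ∀ i, (e (i + 1), v i) ∈ F) :
    ¬ (graphOf F).IsAcyclic := by
  intro hac
  -- The first edge is not a bridge: the rest of the cycle joins its endpoints.
  have hb := SimpleGraph.isAcyclic_iff_forall_adj_isBridge.mp hac (graphOf_adj.mpr (h₁ 0))
  rw [SimpleGraph.isBridge_iff] at hb
  apply hb
  set H := (graphOf F).deleteEdges {s(Sum.inl (e 0), Sum.inr (v 0))} with hH
  have hadj : ∀ a b, (a, b) ∈ F → (a = e 0 → b ≠ v 0) → H.Adj (Sum.inl a) (Sum.inr b) := by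
    intro a b hab hne
    rw [hH, SimpleGraph.deleteEdges_adj]
    refine ⟨graphOf_adj.mpr hab, ?_⟩
    simpa using hne
  have hback : ∀ i : Fin (k + 2), H.Adj (Sum.inl (e (i + 1))) (Sum.inr (v i)) := by
    intro i
    refine hadj _ _ (h₂ i) fun h h' => ?_
    have h0 := he h
    rw [hv h'] at h0
    simp at h0
  have hreach : ∀ j (hj : j < k + 2), H.Reachable (Sum.inr (v 0)) (Sum.inr (v ⟨j, hj⟩)) := by
    intro j
    induction j with
    | zero => exact fun _ => SimpleGraph.Reachable.refl _
    | succ j ih =>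
      intro hj
      refine (ih (by omega)).trans ?_
      have hs : (⟨j, by omega⟩ : Fin (k + 2)) + 1 = ⟨j + 1, hj⟩ := by
        apply Fin.ext
        rw [val_add_one_mod]
        exact Nat.mod_eq_of_lt hj
      have hb := hback ⟨j, by omega⟩
      rw [hs] at hb
      refine hb.symm.reachable.trans (hadj _ _ (h₁ _) fun h _ => ?_).reachable
      simpa using congrArg Fin.val (he h)
  have hl := hback (Fin.last (k + 1))
  rw [Fin.last_add_one] at hl
  exact ((hreach (k + 1) (by omega)).trans hl.symm.reachable).symm

/-! ### Coefficients of points of the simplices -/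

section Hull

variable {E V : Type*} [Fintype E] [Fintype V] [DecidableEq E] [DecidableEq V]

theorem sum_smul_pt_inl (c : E × V → ℝ) (a : E) :
    (∑ p, c p • pt p) (Sum.inl a) = ∑ b, c (a, b) := by
  simp [pt, Fintype.sum_prod_type, Pi.single_apply]

theorem sum_smul_pt_inr (c : E × V → ℝ) (b : V) :
    (∑ p, c p • pt p) (Sum.inr b) = ∑ a, c (a, b) := by
  simp [pt, Fintype.sum_prod_type, Pi.single_apply]

theorem mem_convexHull_pt_iff {F : Set (E × V)} {x : EuclideanSpace ℝ (E ⊕ V)} :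
    x ∈ convexHull ℝ (pt '' F) ↔ ∃ c : E × V → ℝ, (∀ p, 0 ≤ c p) ∧ (∀ p, c p ≠ 0 → p ∈ F) ∧
      ∑ p, c p = 1 ∧ ∑ p, c p • pt p = x := by
  constructor
  · intro hx
    let C : Set (EuclideanSpace ℝ (E ⊕ V)) := {x | ∃ c : E × V → ℝ, (∀ p, 0 ≤ c p) ∧
      (∀ p, c p ≠ 0 → p ∈ F) ∧ ∑ p, c p = 1 ∧ ∑ p, c p • pt p = x}
    refine convexHull_min (t := C) ?_ ?_ hx
    · rintro _ ⟨p, hp, rfl⟩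
      refine ⟨Pi.single p 1, fun q => ?_, fun q hq => ?_, by simp, ?_⟩
      · by_cases h : q = p
        · subst h; simp
        · simp [h]
      · by_cases h : q = p
        · exact h ▸ hp
        · simp [h] at hq
      · simp [Pi.single_apply, ite_smul]
    · rintro _ ⟨c, hc0, hcF, hc1, rfl⟩ _ ⟨d, hd0, hdF, hd1, rfl⟩ s t hs ht hst
      refine ⟨fun p => s * c p + t * d p, fun p => ?_, fun p hp => ?_, ?_, ?_⟩
      · have := hc0 p
        have := hd0 p
        positivity
      · by_contra h
        exact hp (by simp [not_imp_comm.mp (hcF p) h, not_imp_comm.mp (hdF p) h])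
      · rw [Finset.sum_add_distrib, ← Finset.mul_sum, ← Finset.mul_sum, hc1, hd1]
        simpa using hst
      · simp [add_smul, mul_smul, Finset.sum_add_distrib, Finset.smul_sum]
  · rintro ⟨c, hc0, hcF, hc1, rfl⟩
    classical
    have hz : ∀ p ∈ Finset.univ, p ∉ Finset.univ.filter (fun p => c p ≠ 0) → c p = 0 := by
      simp
    rw [← Finset.sum_subset (Finset.filter_subset (fun p => c p ≠ 0) Finset.univ) hz] at hc1
    rw [← Finset.sum_subset (Finset.filter_subset (fun p => c p ≠ 0) Finset.univ)
      fun p hp h => by rw [hz p hp h, zero_smul]]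
    refine (convex_convexHull ℝ _).sum_mem (fun p _ => hc0 p) hc1 fun p hp => ?_
    exact subset_convexHull ℝ _ ⟨p, hcF p (Finset.mem_filter.mp hp).2, rfl⟩

/-- Two distinct coefficient matrices of the same point differ along an alternating cycle. -/
theorem exists_cycle_of_sum_eq {c d : E × V → ℝ} (h : ∑ p, c p • pt p = ∑ p, d p • pt p)
    (hcd : c ≠ d) :
    ∃ (k : ℕ) (e : Fin (k + 2) → E) (v : Fin (k + 2) → V),
      Function.Injective e ∧ Function.Injective v ∧
      (∀ i, d (e i, v i) < c (e i, v i)) ∧ (∀ i, c (e (i + 1), v i) < d (e (i + 1), v i)) := by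
  obtain ⟨k, e, v, he, hv, hp, hn⟩ := exists_alternating_cycle (fun p => c p - d p)
    (fun a => by
      rw [Finset.sum_sub_distrib, ← sum_smul_pt_inl, ← sum_smul_pt_inl, h, sub_self])
    (fun b => by
      rw [Finset.sum_sub_distrib, ← sum_smul_pt_inr, ← sum_smul_pt_inr, h, sub_self])
    (fun h0 => hcd (funext fun p => sub_eq_zero.mp (congrFun h0 p)))
  exact ⟨k, e, v, he, hv, fun i => sub_pos.mp (hp i), fun i => sub_neg.mp (hn i)⟩

end Hull

/-! ### Compatibility of simplices -/

/-- Given two spanning trees `Γ₁` and `Γ₂` of a connected bipartite graph `G`, the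
corresponding simplices of the root polytope intersect in a common face (i.e. in the
simplex spanned by the points of `Γ₁ ∩ Γ₂`) iff there is no cycle
`ε₁, ε₂, …, ε_{2m}` with `m = k + 2 ≥ 2`, visiting `2m` distinct vertices
`e₀, v₀, e₁, v₁, …, e_{m-1}, v_{m-1}`, whose odd-index edges `ε_{2i+1} = (eᵢ, vᵢ)`
all lie in `Γ₁` and whose even-index edges `ε_{2i+2} = (e_{i+1}, vᵢ)` all lie in `Γ₂`
(indices taken cyclically). -/
theorem simplices_compatible_iff_no_alternating_cycle {E V : Type*} [Fintype E] [Fintype V]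
    [DecidableEq E] [DecidableEq V] (A : Set (E × V)) (hconn : (graphOf A).Connected)
    (Γ₁ Γ₂ : Set (E × V)) (h₁ : Γ₁ ⊆ A) (h₂ : Γ₂ ⊆ A)
    (ht₁ : (graphOf Γ₁).IsTree) (ht₂ : (graphOf Γ₂).IsTree) :
    (convexHull ℝ (pt '' Γ₁) ∩ convexHull ℝ (pt '' Γ₂)
        = convexHull ℝ (pt '' (Γ₁ ∩ Γ₂)))
      ↔ ¬ ∃ (k : ℕ) (e : Fin (k + 2) → E) (v : Fin (k + 2) → V),
            Function.Injective e ∧ Function.Injective v ∧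
            (∀ i : Fin (k + 2), (e i, v i) ∈ Γ₁) ∧
            (∀ i : Fin (k + 2), (e (i + 1), v i) ∈ Γ₂) := by
  constructor
  · rintro hI ⟨k, e, v, he, hv, hc₁, hc₂⟩
    let x : EuclideanSpace ℝ (E ⊕ V) := ∑ i, ((k + 2 : ℝ)⁻¹) • pt (e i, v i)
    have hk : (0 : ℝ) < (k + 2 : ℝ)⁻¹ := by positivity
    have hk1 : ∑ _i : Fin (k + 2), (k + 2 : ℝ)⁻¹ = 1 := by
      simp only [Finset.sum_const, Finset.card_univ, Fintype.card_fin, nsmul_eq_mul]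
      push_cast
      exact mul_inv_cancel₀ (by positivity)
    have hx₁ : x ∈ convexHull ℝ (pt '' Γ₁) :=
      (convex_convexHull ℝ _).sum_mem (fun _ _ => hk.le) hk1
        fun i _ => subset_convexHull ℝ _ ⟨_, hc₁ i, rfl⟩
    have hx₂ : x ∈ convexHull ℝ (pt '' Γ₂) := by
      have hx : x = ∑ i, ((k + 2 : ℝ)⁻¹) • pt (e (i + 1), v i) := by
        simp only [x, ← Finset.smul_sum, pt, Finset.sum_add_distrib]
        -- The two barycenters differ by a cyclic shift of the `E`-vertices.
        rw [← Equiv.sum_comp (Equiv.addRight (1 : Fin (k + 2)))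
          (fun i => EuclideanSpace.single (Sum.inl (e i) : E ⊕ V) (1 : ℝ))]
        rfl
      rw [hx]
      exact (convex_convexHull ℝ _).sum_mem (fun _ _ => hk.le) hk1
        fun i _ => subset_convexHull ℝ _ ⟨_, hc₂ i, rfl⟩
    have hx : x ∈ convexHull ℝ (pt '' (Γ₁ ∩ Γ₂)) := hI ▸ ⟨hx₁, hx₂⟩
    obtain ⟨d, -, hdF, -, hdx⟩ := mem_convexHull_pt_iff.mp hx
    let c : E × V → ℝ := fun p => ∑ i, if (e i, v i) = p then (k + 2 : ℝ)⁻¹ else 0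
    have hcpos : ∀ i, c (e i, v i) ≠ 0 := by
      intro i
      refine (hk.trans_le ?_).ne'
      refine le_trans (by simp) (Finset.single_le_sum (fun j _ => ?_) (Finset.mem_univ i))
      split_ifs <;> positivity
    have hcF : ∀ p, c p ≠ 0 → p ∈ Γ₁ := by
      intro p hp
      obtain ⟨i, -, hi⟩ := Finset.exists_ne_zero_of_sum_ne_zero hp
      have hip : (e i, v i) = p := by
        by_contra h
        exact hi (if_neg h)
      exact hip ▸ hc₁ i
    have hcx : ∑ p, c p • pt p = x := by
      simp only [c, Finset.sum_smul, ite_smul, zero_smul]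
      rw [Finset.sum_comm]
      simp [x]
    by_cases hcd : c = d
    · exact not_isAcyclic_of_cycle he hv (fun i => (hdF _ (hcd ▸ hcpos i)).2) hc₂ ht₂.isAcyclic
    · obtain ⟨k', e', v', he', hv', hp, hn⟩ := exists_cycle_of_sum_eq (hcx.trans hdx.symm) hcd
      have hmem : ∀ p, c p ≠ d p → p ∈ Γ₁ := by
        intro p hp
        by_cases h : c p = 0
        · exact (hdF p fun h' => hp (h.trans h'.symm)).1
        · exact hcF p h
      exact not_isAcyclic_of_cycle he' hv' (fun i => hmem _ (hp i).ne')
        (fun i => hmem _ (hn i).ne) ht₁.isAcyclic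
  · intro hno
    apply Set.Subset.antisymm
    · rintro x ⟨hx₁, hx₂⟩
      obtain ⟨c, hc0, hcF, hc1, hcx⟩ := mem_convexHull_pt_iff.mp hx₁
      obtain ⟨d, hd0, hdF, -, hdx⟩ := mem_convexHull_pt_iff.mp hx₂
      have hcd : c = d := by
        by_contra hcd
        obtain ⟨k, e, v, he, hv, hp, hn⟩ := exists_cycle_of_sum_eq (hcx.trans hdx.symm) hcd
        exact hno ⟨k, e, v, he, hv, fun i => hcF _ ((hd0 _).trans_lt (hp i)).ne',
          fun i => hdF _ ((hc0 _).trans_lt (hn i)).ne'⟩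
      exact mem_convexHull_pt_iff.mpr
        ⟨c, hc0, fun p hp => ⟨hcF p hp, hdF p (hcd ▸ hp)⟩, hc1, hcx⟩
    · exact Set.subset_inter (convexHull_mono (Set.image_mono Set.inter_subset_left))
        (convexHull_mono (Set.image_mono Set.inter_subset_right))
end

section
/- Let J be a finite directed multigraph with vertex set R, edge set C, source and target maps src, tgt : C → R, and a distinguished root r₀ ∈ R, and suppose every vertex of R is reachable from r₀ by a directed path in J. Then the number of spanning arborescences of J rooted at r₀ equals the number of parking functions of J with respect to r₀. -/
/-!
The equality is proved by deletion and contraction of an edge leaving the root, and it holds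
without the reachability hypothesis (both sides vanish when some vertex cannot be reached).

To avoid changing types under contraction, everything is generalised to a set `S` of vertices that
have been merged into the root and a set `E` of edges that are still available. Reachability of all
vertices from `S` inside `T` is expressed by cuts: every non-empty `R'` disjoint from `S` is entered
by an edge of `T`. Let `c ∈ E` be an edge from `S` to a vertex `v ∉ S`.

* Arborescences avoiding `c` are those of `E \ {c}`; those containing `c` become, on removing `c`,
  the arborescences for `S ∪ {v}`.
* Parking functions with `π v ≥ 1` become, on lowering `π v` by one, those of `E \ {c}`, because `c`
  contributes one to the relative in-degree of `v` in every `R' ∋ v` and to nothing else. Those with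
  `π v = 0` are the parking functions for `S ∪ {v}`, because `c` makes the condition automatic
  for every `R' ∋ v`.

So both counts satisfy the same recursion (`arbs_encard`, `parks_encard`). If there is no such edge
`c`, both counts are `1` when `S` is everything and `0` otherwise. Cardinalities are taken in `ℕ∞`
so that no finiteness of the set of parking functions is needed.
-/

namespace ArbPark

variable {R C : Type*} [Fintype R] [DecidableEq R] [DecidableEq C]

/-- The spanning arborescences with edges in `E`, rooted at the vertex set `S` regarded as a single
vertex. Reachability from `S` is encoded by the condition that every non-empty vertex set disjoint
from `S` is entered by an edge of the arborescence. -/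
def arbs (src tgt : C → R) (S : Finset R) (E : Finset C) : Set (Finset C) :=
  {T | T ⊆ E ∧ (∀ r ∉ S, (T.filter fun c => tgt c = r).card = 1) ∧ (∀ c ∈ T, tgt c ∉ S) ∧
    ∀ R' : Finset R, Disjoint R' S → R'.Nonempty → ∃ c ∈ T, tgt c ∈ R' ∧ src c ∉ R'}

/-- The parking functions of the graph with edge set `E` in which the vertex set `S` is contracted
to the root. They are encoded as functions on all of `R` that vanish on `S`. -/
def parks (src tgt : C → R) (S : Finset R) (E : Finset C) : Set (R → ℕ) :=
  {π | (∀ r ∈ S, π r = 0) ∧ ∀ R' : Finset R, Disjoint R' S → R'.Nonempty →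
    ∃ r ∈ R', π r < (E.filter fun c => tgt c = r ∧ src c ∉ R').card}

variable {src tgt : C → R} {S : Finset R} {E : Finset C} {c : C}

omit [Fintype R] in
lemma arbs_eq (hc : c ∈ E) (hs : src c ∈ S) (ht : tgt c ∉ S) :
    arbs src tgt S E =
      arbs src tgt S (E.erase c) ∪ insert c '' arbs src tgt (insert (tgt c) S) E := by
  ext T
  constructor
  · rintro ⟨h1, h2, h3, h4⟩
    by_cases hcT : c ∈ T
    · right
      refine ⟨T.erase c, ⟨(Finset.erase_subset _ _).trans h1, ?_, ?_, ?_⟩,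
        Finset.insert_erase hcT⟩
      · intro r hr
        rw [Finset.mem_insert, not_or] at hr
        rw [← h2 r hr.2]
        congr 1
        ext d
        simp only [Finset.mem_filter, Finset.mem_erase]
        grind
      · intro d hd hdS
        rw [Finset.mem_erase] at hd
        rw [Finset.mem_insert] at hdS
        rcases hdS with h | h
        · obtain ⟨a, ha⟩ := Finset.card_eq_one.1 (h2 _ ht)
          have e1 : d ∈ T.filter fun x => tgt x = tgt c := by simp [hd.2, h]
          have e2 : c ∈ T.filter fun x => tgt x = tgt c := by simp [hcT]
          rw [ha, Finset.mem_singleton] at e1 e2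
          exact hd.1 (e1.trans e2.symm)
        · exact h3 d hd.2 h
      · intro R' hd hne
        rw [Finset.disjoint_insert_right] at hd
        obtain ⟨d, hdT, h5, h6⟩ := h4 R' hd.2 hne
        refine ⟨d, Finset.mem_erase.2 ⟨?_, hdT⟩, h5, h6⟩
        rintro rfl
        exact hd.1 h5
    · left
      exact ⟨Finset.subset_erase.2 ⟨h1, hcT⟩, h2, h3, h4⟩
  · rintro (⟨h1, h2⟩ | ⟨T, ⟨h1, h2, h3, h4⟩, rfl⟩)
    · exact ⟨h1.trans (Finset.erase_subset _ _), h2⟩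
    · refine ⟨Finset.insert_subset hc h1, ?_, ?_, ?_⟩
      · intro r hr
        by_cases hrv : r = tgt c
        · rw [Finset.card_eq_one]
          refine ⟨c, ?_⟩
          ext d
          simp only [Finset.mem_filter, Finset.mem_insert, Finset.mem_singleton]
          grind
        · rw [← h2 r (by simp [hrv, hr])]
          congr 1
          ext d
          simp only [Finset.mem_filter, Finset.mem_insert]
          grind
      · grind
      · intro R' hd hne
        by_cases hv : tgt c ∈ R'
        · exact ⟨c, Finset.mem_insert_self _ _, hv, fun h => Finset.disjoint_left.1 hd h hs⟩
        · obtain ⟨d, hdT, h5⟩ := h4 R' (Finset.disjoint_insert_right.2 ⟨hv, hd⟩) hne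
          exact ⟨d, Finset.mem_insert_of_mem hdT, h5⟩

omit [Fintype R] in
/-- Deletion–contraction for arborescences. -/
lemma arbs_encard (hc : c ∈ E) (hs : src c ∈ S) (ht : tgt c ∉ S) :
    (arbs src tgt S E).encard = (arbs src tgt S (E.erase c)).encard +
      (arbs src tgt (insert (tgt c) S) E).encard := by
  have hn : ∀ T ∈ arbs src tgt (insert (tgt c) S) E, c ∉ T := fun T hT hcT =>
    hT.2.2.1 c hcT (Finset.mem_insert_self _ _)
  rw [arbs_eq hc hs ht, Set.encard_union_eq, Set.InjOn.encard_image]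
  · intro T hT T' hT' h
    rw [← Finset.erase_insert (hn T hT), ← Finset.erase_insert (hn T' hT')]
    exact congrArg (fun X => Finset.erase X c) h
  · rw [Set.disjoint_left]
    rintro _ h ⟨T, -, rfl⟩
    exact (Finset.mem_erase.1 (h.1 (Finset.mem_insert_self _ _))).1 rfl

omit [Fintype R] in
/-- Raising `π` by one at `tgt c` compensates for the contribution of `c` to relative in-degrees. -/
lemma add_single_lt_iff (hc : c ∈ E) {R' : Finset R} (hs : src c ∉ R') (π : R → ℕ) (r : R) :
    (π + Pi.single (tgt c) 1 : R → ℕ) r < (E.filter fun d => tgt d = r ∧ src d ∉ R').card ↔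
      π r < ((E.erase c).filter fun d => tgt d = r ∧ src d ∉ R').card := by
  rw [Finset.filter_erase]
  by_cases hr : r = tgt c
  · subst hr
    rw [Finset.card_erase_of_mem (by simp [hc, hs])]
    simp only [Pi.add_apply, Pi.single_eq_same]
    omega
  · rw [Finset.erase_eq_of_notMem (by simp [Ne.symm hr])]
    simp [hr]

omit [Fintype R] in
lemma parks_eq (hc : c ∈ E) (hs : src c ∈ S) (ht : tgt c ∉ S) :
    parks src tgt S E =
      (fun π => π + Pi.single (tgt c) 1) '' parks src tgt S (E.erase c) ∪
        parks src tgt (insert (tgt c) S) E := by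
  have hsR : ∀ R' : Finset R, Disjoint R' S → src c ∉ R' := fun R' hd h =>
    Finset.disjoint_left.1 hd h hs
  ext π
  constructor
  · rintro ⟨h1, h2⟩
    by_cases hv : π (tgt c) = 0
    · right
      refine ⟨by simpa [hv] using h1, fun R' hd hne => h2 R' ?_ hne⟩
      exact (Finset.disjoint_insert_right.1 hd).2
    · left
      have hπ : π - Pi.single (tgt c) 1 + Pi.single (tgt c) 1 = π := by
        ext r
        by_cases hr : r = tgt c
        · subst hr
          simp only [Pi.add_apply, Pi.sub_apply, Pi.single_eq_same]
          omega
        · simp [hr]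
      refine ⟨π - Pi.single (tgt c) 1, ⟨fun r hr => by simp [h1 r hr], fun R' hd hne => ?_⟩, hπ⟩
      obtain ⟨r, hr, h⟩ := h2 R' hd hne
      exact ⟨r, hr, (add_single_lt_iff hc (hsR R' hd) _ r).1 (by rwa [hπ])⟩
  · rintro (⟨π, ⟨h1, h2⟩, rfl⟩ | ⟨h1, h2⟩)
    · refine ⟨fun r hr => ?_, fun R' hd hne => ?_⟩
      · have : r ≠ tgt c := fun h => ht (h ▸ hr)
        simp [h1 r hr, this]
      · obtain ⟨r, hr, h⟩ := h2 R' hd hne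
        exact ⟨r, hr, (add_single_lt_iff hc (hsR R' hd) _ r).2 h⟩
    · refine ⟨fun r hr => h1 r (Finset.mem_insert_of_mem hr), fun R' hd hne => ?_⟩
      by_cases hv : tgt c ∈ R'
      · refine ⟨_, hv, ?_⟩
        rw [h1 _ (Finset.mem_insert_self _ _), Finset.card_pos]
        exact ⟨c, by simp [hc, hsR R' hd]⟩
      · exact h2 R' (Finset.disjoint_insert_right.2 ⟨hv, hd⟩) hne

omit [Fintype R] in
/-- Deletion–contraction for parking functions. -/
lemma parks_encard (hc : c ∈ E) (hs : src c ∈ S) (ht : tgt c ∉ S) :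
    (parks src tgt S E).encard = (parks src tgt S (E.erase c)).encard +
      (parks src tgt (insert (tgt c) S) E).encard := by
  rw [parks_eq hc hs ht, Set.encard_union_eq, Set.InjOn.encard_image]
  · exact (add_left_injective _).injOn
  · rw [Set.disjoint_left]
    rintro _ ⟨π, -, rfl⟩ h
    have := h.1 _ (Finset.mem_insert_self _ _)
    simp at this

omit [DecidableEq C] in
lemma encard_eq_of_no_edge (h : ∀ c ∈ E, src c ∈ S → tgt c ∈ S) :
    (arbs src tgt S E).encard = (parks src tgt S E).encard := by
  by_cases hS : S = Finset.univ
  · subst hS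
    have h1 : arbs src tgt Finset.univ E = {∅} := by
      ext T
      simp only [arbs, Set.mem_ofPred_eq, Set.mem_singleton_iff]
      constructor
      · rintro ⟨-, -, h3, -⟩
        exact Finset.eq_empty_of_forall_notMem fun c hc => h3 c hc (Finset.mem_univ _)
      · rintro rfl
        refine ⟨by simp, by simp, by simp, fun R' hd hne => ?_⟩
        obtain ⟨r, hr⟩ := hne
        exact (Finset.disjoint_left.1 hd hr (Finset.mem_univ _)).elim
    have h2 : parks src tgt Finset.univ E = {0} := by
      ext π
      simp only [parks, Set.mem_ofPred_eq, Set.mem_singleton_iff]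
      constructor
      · rintro ⟨h3, -⟩
        exact funext fun r => h3 r (Finset.mem_univ _)
      · rintro rfl
        refine ⟨by simp, fun R' hd hne => ?_⟩
        obtain ⟨r, hr⟩ := hne
        exact (Finset.disjoint_left.1 hd hr (Finset.mem_univ _)).elim
    rw [h1, h2, Set.encard_singleton, Set.encard_singleton]
  · -- The complement of `S` is non-empty and entered by no edge, so both conditions fail for it.
    have hne : Sᶜ.Nonempty := by
      rwa [Finset.nonempty_iff_ne_empty, ne_eq, Finset.compl_eq_empty_iff]
    have hd : Disjoint Sᶜ S := disjoint_compl_left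
    have h1 : arbs src tgt S E = ∅ := by
      rw [Set.eq_empty_iff_forall_notMem]
      rintro T ⟨h1, -, -, h4⟩
      obtain ⟨c, hc, h5, h6⟩ := h4 _ hd hne
      rw [Finset.mem_compl] at h5 h6
      exact h5 (h c (h1 hc) (not_not.1 h6))
    have h2 : parks src tgt S E = ∅ := by
      rw [Set.eq_empty_iff_forall_notMem]
      rintro π ⟨-, h4⟩
      obtain ⟨r, hr, h5⟩ := h4 _ hd hne
      obtain ⟨c, hc⟩ := Finset.card_pos.1 (Nat.zero_lt_of_lt h5)
      simp only [Finset.mem_filter, Finset.mem_compl, not_not] at hc hr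
      exact hr (hc.2.1 ▸ h c hc.1 hc.2.2)
    rw [h1, h2, Set.encard_empty, Set.encard_empty]

/-- Induction over deletion and contraction: each step shrinks `E` or the complement of `S`. -/
theorem encard_eq (src tgt : C → R) (S : Finset R) (E : Finset C) :
    (arbs src tgt S E).encard = (parks src tgt S E).encard := by
  by_cases h : ∀ c ∈ E, src c ∈ S → tgt c ∈ S
  · exact encard_eq_of_no_edge h
  · push Not at h
    obtain ⟨c, hc, hs, ht⟩ := h
    rw [arbs_encard hc hs ht, parks_encard hc hs ht, encard_eq src tgt S (E.erase c),
      encard_eq src tgt (insert (tgt c) S) E]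
termination_by E.card + Sᶜ.card
decreasing_by
  · exact Nat.add_lt_add_right (Finset.card_erase_lt_of_mem hc) _
  · refine Nat.add_lt_add_left (Finset.card_lt_card ?_) _
    exact compl_lt_compl_iff_lt.2 (Finset.ssubset_insert ht)

omit [DecidableEq C] in
/-- All vertices are reachable from `r₀` in `T` if and only if every non-empty vertex set avoiding
`r₀` is entered by an edge of `T`. -/
lemma reach_iff (src tgt : C → R) (r₀ : R) (T : Finset C) :
    (∀ r, Relation.ReflTransGen (fun a b => ∃ c ∈ T, src c = a ∧ tgt c = b) r₀ r) ↔
      ∀ R' : Finset R, Disjoint R' {r₀} → R'.Nonempty → ∃ c ∈ T, tgt c ∈ R' ∧ src c ∉ R' := by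
  classical
  constructor
  · rintro h R' hd ⟨r, hr⟩
    rw [Finset.disjoint_singleton_right] at hd
    by_contra! hcon
    have : ∀ r, Relation.ReflTransGen (fun a b => ∃ c ∈ T, src c = a ∧ tgt c = b) r₀ r →
        r ∉ R' := by
      intro r hr
      induction hr with
      | refl => exact hd
      | tail _ hstep ih =>
        obtain ⟨c, hc, rfl, rfl⟩ := hstep
        exact fun h => ih (hcon c hc h)
    exact this r (h r) hr
  · intro h
    by_contra! hcon
    obtain ⟨r, hr⟩ := hcon
    -- The cut condition fails for the set of unreachable vertices.
    obtain ⟨c, hc, h1, h2⟩ := h (Finset.univ.filter fun r =>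
      ¬ Relation.ReflTransGen (fun a b => ∃ c ∈ T, src c = a ∧ tgt c = b) r₀ r)
      (by simp [Relation.ReflTransGen.refl]) ⟨r, by simpa using hr⟩
    simp only [Finset.mem_filter, Finset.mem_univ, true_and, not_not] at h1 h2
    exact h1 (h2.tail ⟨c, hc, rfl, rfl⟩)

end ArbPark


/-- For a finite directed multigraph `J` (vertex set `R`, edge set `C`, source and target
maps `src, tgt : C → R`) with a root `r₀` from which every vertex is reachable by a
directed path, the number of spanning arborescences of `J` rooted at `r₀` equals the
number of parking functions of `J` with respect to `r₀`.

A spanning arborescence rooted at `r₀` is a set `T` of edges such that every vertex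
`r ≠ r₀` is the target of exactly one edge of `T`, no edge of `T` has target `r₀`, and
every vertex is reachable from `r₀` using edges of `T`.  A parking function is a map
`π : R ∖ {r₀} → ℕ` such that every non-empty `R' ⊆ R ∖ {r₀}` contains a vertex `r` with
`π r` strictly less than the number of edges with target `r` and source outside `R'`. -/
theorem card_arborescences_eq_card_parkingFunctions
    {R C : Type*} [Fintype R] [Fintype C] [DecidableEq R] [DecidableEq C]
    (r₀ : R) (src tgt : C → R)
    (hreach : ∀ r : R,
      Relation.ReflTransGen (fun a b => ∃ c : C, src c = a ∧ tgt c = b) r₀ r) :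
    {T : Finset C |
        (∀ r : R, r ≠ r₀ → (T.filter fun c => tgt c = r).card = 1) ∧
        (∀ c ∈ T, tgt c ≠ r₀) ∧
        (∀ r : R,
          Relation.ReflTransGen (fun a b => ∃ c ∈ T, src c = a ∧ tgt c = b) r₀ r)}.ncard
      = {π : {r : R // r ≠ r₀} → ℕ |
          ∀ R' : Finset R, R' ⊆ Finset.univ.erase r₀ → R'.Nonempty →
            ∃ r ∈ R', ∃ h : r ≠ r₀,
              π ⟨r, h⟩
                < (Finset.univ.filter fun c : C => tgt c = r ∧ src c ∉ R').card}.ncard := by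
  have hA : {T : Finset C |
        (∀ r : R, r ≠ r₀ → (T.filter fun c => tgt c = r).card = 1) ∧
        (∀ c ∈ T, tgt c ≠ r₀) ∧
        (∀ r : R,
          Relation.ReflTransGen (fun a b => ∃ c ∈ T, src c = a ∧ tgt c = b) r₀ r)} =
      ArbPark.arbs src tgt {r₀} Finset.univ := by
    ext T
    simp only [ArbPark.arbs, Set.mem_ofPred_eq, ArbPark.reach_iff, Finset.mem_singleton,
      Finset.subset_univ, true_and, ne_eq]
  -- Restriction to `R ∖ {r₀}` is injective on functions vanishing at `r₀`.
  have hP : {π : {r : R // r ≠ r₀} → ℕ |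
          ∀ R' : Finset R, R' ⊆ Finset.univ.erase r₀ → R'.Nonempty →
            ∃ r ∈ R', ∃ h : r ≠ r₀,
              π ⟨r, h⟩
                < (Finset.univ.filter fun c : C => tgt c = r ∧ src c ∉ R').card} =
      (fun (π : R → ℕ) (r : {r : R // r ≠ r₀}) => π r) ''
        ArbPark.parks src tgt {r₀} Finset.univ := by
    ext π
    constructor
    · intro h
      refine ⟨fun r => if h : r ≠ r₀ then π ⟨r, h⟩ else 0, ⟨by simp, fun R' hd hne => ?_⟩, ?_⟩
      · rw [Finset.disjoint_singleton_right] at hd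
        obtain ⟨r, hr, hr0, hlt⟩ := h R' (Finset.subset_erase.2 ⟨Finset.subset_univ _, hd⟩) hne
        exact ⟨r, hr, by simpa [hr0] using hlt⟩
      · ext r
        simp [r.2]
    · rintro ⟨π, ⟨-, h⟩, rfl⟩ R' hd hne
      have h0 : r₀ ∉ R' := (Finset.subset_erase.1 hd).2
      obtain ⟨r, hr, hlt⟩ := h R' (Finset.disjoint_singleton_right.2 h0) hne
      exact ⟨r, hr, fun e => h0 (e ▸ hr), hlt⟩
  rw [hA, hP, Set.ncard, Set.ncard, Set.InjOn.encard_image, ArbPark.encard_eq]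
  intro π hπ π' hπ' h
  ext r
  by_cases hr : r = r₀
  · rw [hπ.1 r (by simp [hr]), hπ'.1 r (by simp [hr])]
  · exact congrFun h ⟨r, hr⟩
end
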